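/- Let γ=(B,M,S,A,Â) be a market with middlemen and v_γ the associated middlemen matching market game. Then there exists a seller-optimal core allocation: a payoff vector x^S∈Core(v_γ) such that x^S_k = mc_k(v_γ) for every seller k∈S, i.e. every seller simultaneously attains her marginal contribution to the grand coalition. -/

import Mathlib

/-!
Matching markets with middlemen (Atay, Bahel, Solymosi).

Players are of three sorts: buyers `B`, middlemen `M`, sellers `S`
(three disjoint nonempty finite types); the player set is `Player B M S = B ⊕ M ⊕ S`.
An (functional representation of a) `T`-matching assigns to each buyer either nothing
(the buyer is single), a seller (direct trade), or a middleman together with a seller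
(mediated trade); distinct buyers get distinct sellers, and all agents involved lie in `T`.
A middleman may mediate several trades.
-/

open scoped Classical

noncomputable section

/-- The set of players of a market with middlemen: buyers `B`, middlemen `M`, sellers `S`. -/
abbrev Player (B M S : Type*) := B ⊕ M ⊕ S

/-- Functional representation of a matching in the market with middlemen: each buyer is
unmatched (`none`), matched directly to a seller (`some (none, k)`), or matched to a seller
through a middleman (`some (some j, k)`). -/
abbrev MMatch (B M S : Type*) := B → Option (Option M × S)

namespace Middlemen

variable {B M S : Type*}

/-- A buyer as a player. -/
def buyer (i : B) : Player B M S := Sum.inl i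

/-- A middleman as a player. -/
def mid (j : M) : Player B M S := Sum.inr (Sum.inl j)

/-- A seller as a player. -/
def seller (k : S) : Player B M S := Sum.inr (Sum.inr k)

/-- `f` is a `T`-matching in the market with middlemen: every basic coalition used by `f`
is contained in `T` and no seller is matched to two distinct buyers.  (Buyers, middlemen
and sellers of `T` not appearing in any trade are singletons of the matching.) -/
def IsMatching (T : Finset (Player B M S)) (f : MMatch B M S) : Prop :=
  (∀ i o k, f i = some (o, k) →
      buyer i ∈ T ∧ seller k ∈ T ∧ ∀ j, o = some j → mid j ∈ T) ∧
  (∀ i i' o o' k, f i = some (o, k) → f i' = some (o', k) → i = i')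

variable [Fintype B] [Fintype M] [Fintype S]

/-- The value `Σ_{(i,k)∈μ} a_{ik} + Σ_{(i,j,k)∈μ} â_{ijk}` of a matching in the market
with middlemen with direct-trade surplus matrix `A` and mediated-trade surpluses `Ah`. -/
def mval (A : B → S → ℝ) (Ah : B → M → S → ℝ) (f : MMatch B M S) : ℝ :=
  ∑ i, (match f i with
    | none => 0
    | some (none, k) => A i k
    | some (some j, k) => Ah i j k)

/-- The TU game `v_γ` associated with the market with middlemen `γ = (B,M,S,A,Ah)`:
the worth of a coalition `T` is the maximal value of a `T`-matching. -/
def vGame (A : B → S → ℝ) (Ah : B → M → S → ℝ) (T : Finset (Player B M S)) : ℝ :=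
  sSup { r | ∃ f : MMatch B M S, IsMatching T f ∧ r = mval A Ah f }

/-- `g` is a matching of the coalition `R` in a two-sided assignment market. -/
def IsMatching2 (R : Finset (B ⊕ S)) (g : B → Option S) : Prop :=
  (∀ i k, g i = some k → Sum.inl i ∈ R ∧ Sum.inr k ∈ R) ∧
  (∀ i i' k, g i = some k → g i' = some k → i = i')

/-- The value of a two-sided matching with valuation matrix `As`. -/
def m2val (As : B → S → ℝ) (g : B → Option S) : ℝ :=
  ∑ i, (match g i with
    | none => 0
    | some k => As i k)

/-- The assignment game `w_{γ*}` of the two-sided assignment market `(B,S,As)`. -/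
def wGame (As : B → S → ℝ) (R : Finset (B ⊕ S)) : ℝ :=
  sSup { r | ∃ g : B → Option S, IsMatching2 R g ∧ r = m2val As g }

/-- The matrix `A*` of the associated two-sided assignment market:
`a*_{ik} = max_{j ∈ M} â_{ijk}`. -/
def Astar [Nonempty M] (Ah : B → M → S → ℝ) (i : B) (k : S) : ℝ :=
  Finset.univ.sup' Finset.univ_nonempty fun j => Ah i j k

/-- The two-sided matching `μ*` induced by a matching `μ` of the market with middlemen:
keep all matched buyer–seller pairs (dropping the middlemen). -/
def star (f : MMatch B M S) : B → Option S := fun i => (f i).map Prod.snd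

/-- `m(i,k)`: the lowest-indexed middleman `j` maximizing `â_{ijk}`. -/
def bestMid [Nonempty M] [LinearOrder M] (Ah : B → M → S → ℝ) (i : B) (k : S) : M :=
  (Finset.univ.filter fun j => ∀ j' : M, Ah i j' k ≤ Ah i j k).min' (by
    obtain ⟨j, -, hj⟩ := Finset.exists_max_image (Finset.univ : Finset M)
      (fun j => Ah i j k) Finset.univ_nonempty
    exact ⟨j, Finset.mem_filter.mpr ⟨Finset.mem_univ _, fun j' => hj j' (Finset.mem_univ _)⟩⟩)

/-- The matching `σ^△` of the market with middlemen induced by a two-sided matching `σ`: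
each matched pair `{i,k}` of `σ` trades through the best middleman `m(i,k)`
(and every other middleman is a singleton). -/
def triangle [Nonempty M] [LinearOrder M] (Ah : B → M → S → ℝ) (g : B → Option S) :
    MMatch B M S :=
  fun i => (g i).map fun k => (some (bestMid Ah i k), k)

/-- The core of a TU game on the finite player set `P`. -/
def core {P : Type*} [Fintype P] (v : Finset P → ℝ) : Set (P → ℝ) :=
  { x | ∑ t, x t = v Finset.univ ∧ ∀ T : Finset P, v T ≤ ∑ t ∈ T, x t }

/-- Augment a payoff vector of the two-sided market with zero payoffs to all middlemen. -/
def aug (xz : B ⊕ S → ℝ) : Player B M S → ℝ := fun t =>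
  match t with
  | Sum.inl i => xz (Sum.inl i)
  | Sum.inr (Sum.inl _) => 0
  | Sum.inr (Sum.inr k) => xz (Sum.inr k)

/-- Restrict a payoff vector of the market with middlemen to the buyers and sellers. -/
def restrictBS (X : Player B M S → ℝ) : B ⊕ S → ℝ := fun t =>
  match t with
  | Sum.inl i => X (buyer i)
  | Sum.inr k => X (seller k)

/-- The set `T ∩ (B ∪ S)` of buyers and sellers of a coalition `T`. -/
def bsPart (T : Finset (Player B M S)) : Finset (B ⊕ S) :=
  Finset.univ.filter fun t =>
    match t with
    | Sum.inl i => buyer i ∈ T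
    | Sum.inr k => (seller k : Player B M S) ∈ T

/-- The coalition `R ∪ M` consisting of the buyers and sellers of `R` together with
all middlemen. -/
def withAllMid (R : Finset (B ⊕ S)) : Finset (Player B M S) :=
  Finset.univ.filter fun t =>
    match t with
    | Sum.inl i => Sum.inl i ∈ R
    | Sum.inr (Sum.inl _) => True
    | Sum.inr (Sum.inr k) => Sum.inr k ∈ R

end Middlemen

/-!
A middleman can serve any number of trades, so a coalition containing all of `M` is worth as much
as the assignment game between its buyers and sellers in which a pair `(i, k)` creates the surplus
of its best way to trade, and every other coalition is worth at most that. Paying the middlemen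
nothing therefore reduces the claim to assignment games.

There, pad the market to a square matrix, price each column at its marginal contribution, and give
each row `i` what is left of its entry `c i (σ i)` in an optimal permutation `σ`. The one
inequality to check is `c i l ≤ y i + z l`. Let `ν` be optimal once column `l` is deleted. In
the union of the two assignments, let row `i` move to `l`, and the row freed by the deletion to
`σ i`. Every column is still covered twice, so by Hall's theorem the union splits into two
permutations, one of which is a competitor for the matrix without column `σ i` and the other for
the full matrix; the optimality of both worths is the required inequality.
-/

namespace Middlemen

section Permutations

open Finset

variable {α β : Type*} [Fintype α]

theorem sum_apply_update_add {γ : Type*} [AddCommMonoid γ] [DecidableEq α] (F : α → β → γ)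
    (f : α → β) (i : α) (j : β) :
    ∑ r, F r (Function.update f i j r) + F i (f i) = ∑ r, F r (f r) + F i j := by
  rw [← add_sum_erase _ _ (mem_univ i), ← add_sum_erase _ (fun r => F r (f r)) (mem_univ i),
    Function.update_self, sum_congr rfl fun r hr => by
      rw [Function.update_of_ne (ne_of_mem_erase hr)]]
  abel

variable [DecidableEq β]

theorem card_le_card_biUnion_pair_of_card_fiber_add_eq_two (a b : α → β)
    (hab : ∀ j, #{r | a r = j} + #{r | b r = j} = 2) (X : Finset α) :
    #X ≤ #(X.biUnion fun r => {a r, b r}) := by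
  set Y := X.biUnion fun r => {a r, b r}
  have card_le_sum_fibers (f : α → β) (hf : ∀ r ∈ X, f r ∈ Y) :
      #X ≤ ∑ j ∈ Y, #{r | f r = j} := by
    rw [card_eq_sum_card_fiberwise hf]
    gcongr
    exact subset_univ X
  have ha := card_le_sum_fibers a fun r hr => mem_biUnion.mpr ⟨r, hr, by simp⟩
  have hb := card_le_sum_fibers b fun r hr => mem_biUnion.mpr ⟨r, hr, by simp⟩
  have hsum : ∑ j ∈ Y, #{r | a r = j} + ∑ j ∈ Y, #{r | b r = j} = #Y * 2 := by
    rw [← sum_add_distrib, sum_congr rfl fun j _ => hab j, sum_const, smul_eq_mul]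
  lia

theorem exists_equiv_pair_of_card_fiber_add_eq_two (a b : α → β)
    (hab : ∀ j, #{r | a r = j} + #{r | b r = j} = 2) :
    ∃ π ρ : α ≃ β, ∀ r, π r = a r ∧ ρ r = b r ∨ π r = b r ∧ ρ r = a r := by
  obtain ⟨f, f_inj, hf⟩ := (all_card_le_biUnion_card_iff_exists_injective _).mp
    (card_le_card_biUnion_pair_of_card_fiber_add_eq_two a b hab)
  let g : α → β := fun r => if f r = a r then b r else a r
  have hfg (r : α) : f r = a r ∧ g r = b r ∨ f r = b r ∧ g r = a r := by
    grind
  have card_fibers (j : β) : #{r | f r = j} + #{r | g r = j} = 2 := by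
    rw [← hab j]
    simp only [card_filter, ← sum_add_distrib]
    refine sum_congr rfl fun r _ => ?_
    rcases hfg r with ⟨hf, hg⟩ | ⟨hf, hg⟩ <;> rw [hf, hg]
    exact add_comm _ _
  have g_surj : g.Surjective := fun j => by
    have hsum := card_fibers j
    have hf_le : #{r | f r = j} ≤ 1 := card_le_one.mpr fun r hr s hs => f_inj (by grind)
    obtain ⟨r, hr⟩ := card_pos.mp (show 0 < #{r | g r = j} by lia)
    exact ⟨r, by simpa using hr⟩
  have : Finite β := .of_surjective g g_surj
  exact ⟨.ofBijective f (f_inj.bijective_of_nat_card_le (Nat.card_le_card_of_surjective g g_surj)),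
    .ofBijective g (g_surj.bijective_of_nat_card_le (Nat.card_le_card_of_injective f f_inj)), hfg⟩

theorem card_fiber_update_add_card_fiber_update [DecidableEq α] (σ ν : Equiv.Perm α) (i l j : α) :
    #{r | Function.update σ i l r = j} + #{r | Function.update ν (ν.symm l) (σ i) r = j} = 2 := by
  have card_fiber (τ : Equiv.Perm α) : ∑ r, (if τ r = j then 1 else 0) = 1 := by
    rw [Equiv.sum_comp τ fun s => if s = j then 1 else 0, sum_ite_eq' univ j, if_pos (mem_univ j)]
  have hσ := sum_apply_update_add (fun _ s => if s = j then 1 else 0) σ i l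
  have hν := sum_apply_update_add (fun _ s => if s = j then 1 else 0) ν (ν.symm l) (σ i)
  rw [card_fiber] at hσ hν
  rw [Equiv.apply_symm_apply] at hν
  simp only [card_filter]
  lia

end Permutations

section SquareAssignment

open Matrix

variable {n : Type*} [Fintype n]

/-- The optimal value of the assignment problem with square matrix `c`, in which every row is
assigned a column. Deleting column `k` is expressed by `c.updateCol k 0`. -/
def assignmentWorth (c : Matrix n n ℝ) : ℝ := ⨆ σ : Equiv.Perm n, ∑ r, c r (σ r)

theorem le_assignmentWorth (c : Matrix n n ℝ) (σ : Equiv.Perm n) :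
    ∑ r, c r (σ r) ≤ assignmentWorth c :=
  le_ciSup (Set.finite_range fun σ : Equiv.Perm n => ∑ r, c r (σ r)).bddAbove σ

theorem exists_sum_eq_assignmentWorth (c : Matrix n n ℝ) :
    ∃ σ : Equiv.Perm n, ∑ r, c r (σ r) = assignmentWorth c :=
  exists_eq_ciSup_of_finite

variable [DecidableEq n]

theorem sum_updateCol_zero_add (c : Matrix n n ℝ) (k : n) (σ : Equiv.Perm n) :
    ∑ r, c.updateCol k 0 r (σ r) + c (σ.symm k) k = ∑ r, c r (σ r) := by
  rw [← Finset.add_sum_erase _ _ (Finset.mem_univ (σ.symm k)),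
    ← Finset.add_sum_erase _ (fun r => c r (σ r)) (Finset.mem_univ (σ.symm k)),
    Finset.sum_congr rfl fun r hr => updateCol_ne ?_]
  · simp [add_comm]
  · exact fun h => Finset.ne_of_mem_erase hr (σ.eq_symm_apply.mpr h)

theorem assignmentWorth_le_updateCol_zero_add (c : Matrix n n ℝ) {σ : Equiv.Perm n}
    (hσ : ∑ r, c r (σ r) = assignmentWorth c) (i : n) :
    assignmentWorth c ≤ assignmentWorth (c.updateCol (σ i) 0) + c i (σ i) := by
  have hsum := sum_updateCol_zero_add c (σ i) σ
  rw [σ.symm_apply_apply] at hsum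
  linarith [le_assignmentWorth (c.updateCol (σ i) 0) σ]

theorem assignmentWorth_updateCol_zero_le {c : Matrix n n ℝ} (hc : ∀ i j, 0 ≤ c i j) (k : n) :
    assignmentWorth (c.updateCol k 0) ≤ assignmentWorth c :=
  ciSup_le fun σ => by
    linarith [sum_updateCol_zero_add c k σ, hc (σ.symm k) k, le_assignmentWorth c σ]

theorem add_assignmentWorth_updateCol_zero_le (c : Matrix n n ℝ) {σ : Equiv.Perm n}
    (hσ : ∑ r, c r (σ r) = assignmentWorth c) (i l : n) :
    c i l + assignmentWorth (c.updateCol l 0) ≤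
      c i (σ i) + assignmentWorth (c.updateCol (σ i) 0) := by
  obtain ⟨ν, hν⟩ := exists_sum_eq_assignmentWorth (c.updateCol l 0)
  set i' := ν.symm l with hi'
  obtain ⟨π, ρ, hπρ⟩ := exists_equiv_pair_of_card_fiber_add_eq_two _ _
    (card_fiber_update_add_card_fiber_update σ ν i l)
  have hsum : ∑ r, c r (π r) + ∑ r, c r (ρ r) =
      ∑ r, c r (Function.update σ i l r) + ∑ r, c r (Function.update ν i' (σ i) r) := by
    simp only [← Finset.sum_add_distrib]
    refine Finset.sum_congr rfl fun r _ => ?_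
    rcases hπρ r with ⟨hπ, hρ⟩ | ⟨hπ, hρ⟩ <;> rw [hπ, hρ]
    exact add_comm _ _
  have hσ_update := sum_apply_update_add c σ i l
  have hν_update := sum_apply_update_add c ν i' (σ i)
  rw [hi', ν.apply_symm_apply, ← hi'] at hν_update
  have hν_erase := sum_updateCol_zero_add c l ν
  have bound_of_apply_eq (τ : Equiv.Perm n) (hτ : τ i' = σ i) :
      ∑ r, c r (τ r) ≤ assignmentWorth (c.updateCol (σ i) 0) + c i' (σ i) := by
    have hτ_erase := sum_updateCol_zero_add c (σ i) τ
    rw [← hτ, τ.symm_apply_apply] at hτ_erase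
    rw [← hτ]
    linarith [le_assignmentWorth (c.updateCol (τ i') 0) τ]
  rcases hπρ i' with ⟨-, hρ⟩ | ⟨hπ, -⟩
  · rw [Function.update_self] at hρ
    linarith [bound_of_apply_eq ρ hρ, le_assignmentWorth c π]
  · rw [Function.update_self] at hπ
    linarith [bound_of_apply_eq π hπ, le_assignmentWorth c ρ]

theorem exists_dual_eq_marginal_assignmentWorth {c : Matrix n n ℝ} (hc : ∀ i j, 0 ≤ c i j) :
    ∃ y z : n → ℝ, 0 ≤ y ∧ 0 ≤ z ∧ (∀ i j, c i j ≤ y i + z j) ∧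
      ∑ i, y i + ∑ j, z j = assignmentWorth c ∧
      ∀ j, z j = assignmentWorth c - assignmentWorth (c.updateCol j 0) := by
  obtain ⟨σ, hσ⟩ := exists_sum_eq_assignmentWorth c
  let z : n → ℝ := fun j => assignmentWorth c - assignmentWorth (c.updateCol j 0)
  refine ⟨fun i => c i (σ i) - z (σ i), z, fun i => ?_, fun j => ?_, fun i j => ?_, ?_,
    fun _ => rfl⟩
  · simp only [z, Pi.zero_apply]
    linarith [assignmentWorth_le_updateCol_zero_add c hσ i]
  · exact sub_nonneg.mpr (assignmentWorth_updateCol_zero_le hc j)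
  · simp only [z]
    linarith [add_assignmentWorth_updateCol_zero_le c hσ i j]
  · rw [Finset.sum_sub_distrib, Equiv.sum_comp σ z, sub_add_cancel, hσ]

end SquareAssignment

section Core

variable {P : Type*} [Fintype P] [DecidableEq P]

theorem apply_le_marginal_of_mem_core {v : Finset P → ℝ} {x : P → ℝ} (hx : x ∈ core v) (t : P) :
    x t ≤ v Finset.univ - v (Finset.univ.erase t) := by
  linarith [hx.1, hx.2 (Finset.univ.erase t), Finset.add_sum_erase _ x (Finset.mem_univ t)]

end Core

section AssignmentGame

open Finset Matrix

theorem fromBlocks_updateCol_inr_zero {B S : Type*} [DecidableEq B] [DecidableEq S]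
    (W : Matrix B S ℝ) (k : S) :
    (fromBlocks 0 W 0 0 : Matrix (B ⊕ S) (B ⊕ S) ℝ).updateCol (.inr k) 0 =
      fromBlocks 0 (W.updateCol k 0) 0 0 := by
  ext (_ | _) (_ | _) <;> simp [updateCol_apply]

variable {B S : Type*} [Fintype B]

theorem m2val_eq_sum_elim (W : B → S → ℝ) (g : B → Option S) :
    m2val W g = ∑ i, (g i).elim 0 (W i) :=
  sum_congr rfl fun i _ => by cases g i <;> rfl

theorem le_wGame [Finite S] (W : B → S → ℝ) {R : Finset (B ⊕ S)} {g : B → Option S}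
    (hg : IsMatching2 R g) : m2val W g ≤ wGame W R :=
  le_csSup ((Set.finite_range (m2val W)).subset (by rintro _ ⟨g, -, rfl⟩; exact ⟨g, rfl⟩)).bddAbove
    ⟨g, hg, rfl⟩

theorem wGame_le {W : B → S → ℝ} {R : Finset (B ⊕ S)} {r : ℝ}
    (h : ∀ g, IsMatching2 R g → m2val W g ≤ r) : wGame W R ≤ r :=
  csSup_le ⟨_, fun _ => none, by simp [IsMatching2], rfl⟩ (by rintro _ ⟨g, hg, rfl⟩; exact h g hg)

theorem sum_elim_le_sum_toRight {R : Finset (B ⊕ S)} {g : B → Option S} (hg : IsMatching2 R g)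
    {z : S → ℝ} (hz : 0 ≤ z) : ∑ i, (g i).elim 0 z ≤ ∑ k ∈ R.toRight, z k :=
  calc ∑ i, (g i).elim 0 z
      = ∑ i, ∑ k ∈ R.toRight, if g i = some k then z k else 0 := by
        refine sum_congr rfl fun i _ => ?_
        rcases hi : g i with _ | k
        · simp
        · simp [(hg.1 i k hi).2]
    _ = ∑ k ∈ R.toRight, #{i | g i = some k} • z k := by
        rw [sum_comm]
        simp only [← sum_filter, sum_const]
    _ ≤ ∑ k ∈ R.toRight, z k := by
        refine sum_le_sum fun k _ => ?_
        have hcard : #{i | g i = some k} ≤ 1 := card_le_one.mpr fun i hi i' hi' =>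
          hg.2 i i' k (mem_filter.mp hi).2 (mem_filter.mp hi').2
        simpa only [one_nsmul] using nsmul_le_nsmul_left (hz k) hcard

theorem wGame_le_sum_of_le_add {W : B → S → ℝ} {y : B → ℝ} {z : S → ℝ} (hy : 0 ≤ y) (hz : 0 ≤ z)
    (hW : ∀ i k, W i k ≤ y i + z k) (R : Finset (B ⊕ S)) :
    wGame W R ≤ ∑ t ∈ R, Sum.elim y z t := by
  refine wGame_le fun g hg => ?_
  have hbuyer (i : B) :
      (g i).elim 0 (W i) ≤ (if i ∈ R.toLeft then y i else 0) + (g i).elim 0 z := by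
    rcases hi : g i with _ | k
    · simpa using ite_nonneg (hy i) le_rfl
    · simpa [(hg.1 i k hi).1] using hW i k
  calc m2val W g
      ≤ ∑ i, ((if i ∈ R.toLeft then y i else 0) + (g i).elim 0 z) := by
        rw [m2val_eq_sum_elim]
        exact sum_le_sum fun i _ => hbuyer i
    _ = ∑ i ∈ R.toLeft, y i + ∑ i, (g i).elim 0 z := by
        rw [sum_add_distrib, sum_ite_mem, univ_inter]
    _ ≤ ∑ i ∈ R.toLeft, y i + ∑ k ∈ R.toRight, z k := by
        gcongr
        exact sum_elim_le_sum_toRight hg hz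
    _ = ∑ t ∈ R, Sum.elim y z t := by
        simp only [sum_sum_eq_sum_toLeft_add_sum_toRight, Sum.elim_inl, Sum.elim_inr]

theorem assignmentWorth_fromBlocks_le_wGame [Fintype S] {W : B → S → ℝ} {W' : Matrix B S ℝ}
    {R : Finset (B ⊕ S)}
    (hW' : ∀ i k, 0 < W' i k → Sum.inl i ∈ R ∧ Sum.inr k ∈ R ∧ W' i k ≤ W i k) :
    assignmentWorth (fromBlocks 0 W' 0 0) ≤ wGame W R := by
  refine ciSup_le fun σ => ?_
  let g : B → Option S := fun i => (σ (.inl i)).getRight?.filter fun k => 0 < W' i k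
  have hg_iff (i : B) (k : S) : g i = some k ↔ σ (.inl i) = .inr k ∧ 0 < W' i k := by
    simp [g]
  have hg : IsMatching2 R g := by
    refine ⟨fun i k h => ?_, fun i i' k h h' => ?_⟩
    · obtain ⟨hl, hr, -⟩ := hW' i k ((hg_iff i k).mp h).2
      exact ⟨hl, hr⟩
    · exact Sum.inl_injective (σ.injective
        (((hg_iff i k).mp h).1.trans ((hg_iff i' k).mp h').1.symm))
  refine le_trans ?_ (le_wGame W hg)
  rw [m2val_eq_sum_elim, Fintype.sum_sum_type, sum_eq_zero (s := univ (α := S)), add_zero]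
  · refine sum_le_sum fun i _ => ?_
    rcases hi : σ (.inl i) with i' | k
    · simp [g, hi]
    · by_cases hpos : 0 < W' i k
      · simpa [(hg_iff i k).mpr ⟨hi, hpos⟩] using (hW' i k hpos).2.2
      · simpa [g, hi, hpos, Option.filter] using not_lt.mp hpos
  · intro k _
    cases σ (.inr k) <;> simp

theorem exists_seller_optimal_core_wGame [Fintype S] (W : B → S → ℝ) :
    ∃ x ∈ core (wGame W), ∀ k : S,
      x (.inr k) = wGame W univ - wGame W (univ.erase (.inr k)) := by
  let W' : Matrix B S ℝ := fun i k => max (W i k) 0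
  have W'_eq {i : B} {k : S} (h : 0 < W' i k) : W' i k = W i k :=
    max_eq_left ((lt_max_iff.mp h).resolve_right (lt_irrefl 0)).le
  let c : Matrix (B ⊕ S) (B ⊕ S) ℝ := fromBlocks 0 W' 0 0
  have hc : ∀ r s, 0 ≤ c r s := by
    rintro (_ | _) (_ | _)
    all_goals first | exact le_rfl | exact le_max_right _ _
  obtain ⟨y, z, hy, hz, hdual, hsum, hz_eq⟩ := exists_dual_eq_marginal_assignmentWorth hc
  let x : B ⊕ S → ℝ := Sum.elim (y ∘ .inl) (z ∘ .inr)
  have hstable : ∀ R, wGame W R ≤ ∑ t ∈ R, x t :=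
    wGame_le_sum_of_le_add (fun i => hy _) (fun k => hz _) fun i k =>
      (le_max_left _ _).trans (hdual (.inl i) (.inr k))
  have hworth : assignmentWorth c ≤ wGame W univ :=
    assignmentWorth_fromBlocks_le_wGame fun i k h => ⟨mem_univ _, mem_univ _, (W'_eq h).le⟩
  have hworth_erase (k : S) :
      assignmentWorth (c.updateCol (.inr k) 0) ≤ wGame W (univ.erase (.inr k)) := by
    rw [fromBlocks_updateCol_inr_zero]
    refine assignmentWorth_fromBlocks_le_wGame fun i l h => ?_
    have hl : l ≠ k := by rintro rfl; simp at h
    rw [updateCol_ne hl] at h ⊢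
    exact ⟨by simp, by simp [hl], (W'_eq h).le⟩
  have hx_le : ∑ t, x t ≤ assignmentWorth c := by
    rw [← hsum, ← sum_add_distrib]
    refine sum_le_sum ?_
    rintro (i | k) -
    · exact le_add_of_nonneg_right (hz _)
    · exact le_add_of_nonneg_left (hy _)
  have hx : x ∈ core (wGame W) := ⟨(hx_le.trans hworth).antisymm (hstable _), hstable⟩
  refine ⟨x, hx, fun k => (apply_le_marginal_of_mem_core hx (.inr k)).antisymm ?_⟩
  have hxk : x (.inr k) = assignmentWorth c - assignmentWorth (c.updateCol (.inr k) 0) :=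
    hz_eq (.inr k)
  linarith [hstable univ, hworth_erase k]

end AssignmentGame

section MiddlemenGame

variable {B M S : Type*}

/-- The surplus of a trade between buyer `i` and seller `k`, either direct (`none`) or through
the middleman `j` (`some j`). -/
def tradeSurplus (A : B → S → ℝ) (Ah : B → M → S → ℝ) (i : B) (k : S) : Option M → ℝ
  | none => A i k
  | some j => Ah i j k

/-- The surplus of the best way for buyer `i` and seller `k` to trade, which the reduction to an
assignment game credits to the pair. Unlike in `Astar`, direct trade is one of the options. -/
def bestSurplus (A : B → S → ℝ) (Ah : B → M → S → ℝ) (i : B) (k : S) : ℝ :=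
  ⨆ o, tradeSurplus A Ah i k o

variable (A : B → S → ℝ) (Ah : B → M → S → ℝ)

theorem tradeSurplus_le_bestSurplus [Finite M] (i : B) (k : S) (o : Option M) :
    tradeSurplus A Ah i k o ≤ bestSurplus A Ah i k :=
  le_ciSup (Set.finite_range (tradeSurplus A Ah i k)).bddAbove o

variable [Fintype B]

theorem mval_eq_sum_elim (f : MMatch B M S) :
    mval A Ah f = ∑ i, (f i).elim 0 fun p => tradeSurplus A Ah i p.2 p.1 :=
  Finset.sum_congr rfl fun i _ => by rcases f i with _ | ⟨_ | _, _⟩ <;> rfl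

theorem le_vGame [Finite M] [Finite S] {T : Finset (Player B M S)} {f : MMatch B M S}
    (hf : IsMatching T f) : mval A Ah f ≤ vGame A Ah T :=
  le_csSup ((Set.finite_range (mval A Ah)).subset
    (by rintro _ ⟨f, -, rfl⟩; exact ⟨f, rfl⟩)).bddAbove ⟨f, hf, rfl⟩

variable {A Ah} in
theorem vGame_le {T : Finset (Player B M S)} {r : ℝ}
    (h : ∀ f, IsMatching T f → mval A Ah f ≤ r) : vGame A Ah T ≤ r :=
  csSup_le ⟨_, fun _ => none, by simp [IsMatching], rfl⟩ (by rintro _ ⟨f, hf, rfl⟩; exact h f hf)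

variable [Fintype S]

@[simp]
theorem inl_mem_bsPart {T : Finset (Player B M S)} {i : B} :
    .inl i ∈ bsPart T ↔ buyer i ∈ T := by
  simp [bsPart]

@[simp]
theorem inr_mem_bsPart {T : Finset (Player B M S)} {k : S} :
    .inr k ∈ bsPart T ↔ seller k ∈ T := by
  simp [bsPart]

theorem IsMatching.isMatching2_star {T : Finset (Player B M S)} {f : MMatch B M S}
    (hf : IsMatching T f) : IsMatching2 (bsPart T) (star f) := by
  have exists_of_star {i : B} {k : S} (h : star f i = some k) : ∃ o, f i = some (o, k) := by
    simpa [star] using h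
  refine ⟨fun i k h => ?_, fun i i' k h h' => ?_⟩
  · obtain ⟨o, ho⟩ := exists_of_star h
    obtain ⟨hi, hk, -⟩ := hf.1 i o k ho
    exact ⟨inl_mem_bsPart.mpr hi, inr_mem_bsPart.mpr hk⟩
  · obtain ⟨o, ho⟩ := exists_of_star h
    obtain ⟨o', ho'⟩ := exists_of_star h'
    exact hf.2 i i' o o' k ho ho'

theorem vGame_le_wGame_bestSurplus [Finite M] (T : Finset (Player B M S)) :
    vGame A Ah T ≤ wGame (bestSurplus A Ah) (bsPart T) := by
  refine vGame_le fun f hf => le_trans ?_ (le_wGame _ hf.isMatching2_star)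
  rw [mval_eq_sum_elim, m2val_eq_sum_elim]
  refine Finset.sum_le_sum fun i _ => ?_
  rcases hi : f i with _ | ⟨o, k⟩
  · simp [star, hi]
  · simpa [star, hi] using tradeSurplus_le_bestSurplus A Ah i k o

theorem vGame_eq_wGame_bestSurplus [Finite M] {T : Finset (Player B M S)} (hT : ∀ j, mid j ∈ T) :
    vGame A Ah T = wGame (bestSurplus A Ah) (bsPart T) := by
  refine (vGame_le_wGame_bestSurplus A Ah T).antisymm (wGame_le fun g hg => ?_)
  have exists_best (i : B) (k : S) : ∃ o, tradeSurplus A Ah i k o = bestSurplus A Ah i k :=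
    exists_eq_ciSup_of_finite
  choose best hbest using exists_best
  let f : MMatch B M S := fun i => (g i).map fun k => (best i k, k)
  have of_f_eq {i : B} {o : Option M} {k : S} (h : f i = some (o, k)) : g i = some k := by
    obtain ⟨l, hl, heq⟩ := Option.map_eq_some_iff.mp h
    rwa [← (Prod.mk.inj heq).2]
  have hf : IsMatching T f := by
    refine ⟨fun i o k h => ?_, fun i i' o o' k h h' => hg.2 i i' k (of_f_eq h) (of_f_eq h')⟩
    obtain ⟨hi, hk⟩ := hg.1 i k (of_f_eq h)
    exact ⟨inl_mem_bsPart.mp hi, inr_mem_bsPart.mp hk, fun j _ => hT j⟩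
  have hval : m2val (bestSurplus A Ah) g = mval A Ah f := by
    rw [mval_eq_sum_elim, m2val_eq_sum_elim]
    refine Finset.sum_congr rfl fun i _ => ?_
    cases hi : g i <;> simp [f, hi, hbest]
  exact hval.trans_le (le_vGame A Ah hf)

theorem sum_aug (x : B ⊕ S → ℝ) (T : Finset (Player B M S)) :
    ∑ t ∈ T, aug x t = ∑ t ∈ bsPart T, x t := by
  have hbuyers : (bsPart T).toLeft = T.toLeft := by ext; simp [buyer]
  have hsellers : (bsPart T).toRight = T.toRight.toRight := by ext; simp [seller]
  simp only [Finset.sum_sum_eq_sum_toLeft_add_sum_toRight, hbuyers, hsellers, aug,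
    Finset.sum_const_zero, zero_add]

theorem bsPart_univ [Fintype M] : bsPart (Finset.univ : Finset (Player B M S)) = Finset.univ := by
  ext (i | k) <;> simp

theorem bsPart_erase_seller (T : Finset (Player B M S)) (k : S) :
    bsPart (T.erase (seller k)) = (bsPart T).erase (.inr k) := by
  ext (i | l) <;> simp [buyer, seller]

variable {A Ah} in
theorem aug_mem_core_vGame [Fintype M] {x : B ⊕ S → ℝ} (hx : x ∈ core (wGame (bestSurplus A Ah))) :
    aug x ∈ core (vGame A Ah) := by
  refine ⟨?_, fun T => ?_⟩
  · rw [vGame_eq_wGame_bestSurplus A Ah fun j => Finset.mem_univ _, sum_aug, bsPart_univ, hx.1]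
  · rw [sum_aug]
    exact (vGame_le_wGame_bestSurplus A Ah T).trans (hx.2 _)

end MiddlemenGame

theorem exists_seller_optimal_core_general
    {B M S : Type*} [Fintype B] [Fintype M] [Fintype S]
    (A : B → S → ℝ) (Ah : B → M → S → ℝ) :
    ∃ x ∈ core (vGame A Ah), ∀ k : S,
      x (seller k) = vGame A Ah Finset.univ - vGame A Ah (Finset.univ.erase (seller k)) := by
  obtain ⟨x, hx, hmarginal⟩ := exists_seller_optimal_core_wGame (bestSurplus A Ah)
  refine ⟨aug x, aug_mem_core_vGame hx, fun k => ?_⟩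
  rw [vGame_eq_wGame_bestSurplus A Ah fun j => Finset.mem_univ _,
    vGame_eq_wGame_bestSurplus A Ah (by simp [mid, seller]), bsPart_erase_seller, bsPart_univ]
  exact hmarginal k

/-- there exists a seller-optimal core allocation of `v_γ`, at which every
seller attains her marginal contribution to the grand coalition. -/
theorem exists_seller_optimal_core
    {B M S : Type*} [Fintype B] [Fintype M] [Fintype S]
    [Nonempty B] [Nonempty M] [Nonempty S]
    (A : B → S → ℝ) (Ah : B → M → S → ℝ)
    (hA : ∀ i k, 0 ≤ A i k) (hAh : ∀ i j k, A i k ≤ Ah i j k) :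
    ∃ x ∈ core (vGame A Ah), ∀ k : S,
      x (seller k) = vGame A Ah Finset.univ - vGame A Ah (Finset.univ.erase (seller k)) :=
  exists_seller_optimal_core_general A Ah

end Middlemen
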